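/- Let p ∈ (0,1] and let ξ ∼ Bernoulli(p). Then the smoothed estimator ḡ_T is unbiased for ∇F_T, i.e. E_ξ[ḡ_T(x,ξ)] = ∇F_T(x) for all x ∈ ℝ^T, and its variance satisfies E_ξ[‖ḡ_T(x,ξ) − ∇F_T(x)‖²] ≤ 23²·(1−p)/p for all x ∈ ℝ^T (Euclidean norm). -/

import Mathlib

open MeasureTheory

/-- The scalar function `Ψ` of the hard-instance construction. -/
noncomputable def Psi (t : ℝ) : ℝ :=
  if t ≤ 1 / 2 then 0 else Real.exp (1 - 1 / (2 * t - 1) ^ 2)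

/-- The scalar function `Φ(t) = √e ∫_{−∞}^t e^{−τ²/2} dτ` of the hard-instance
construction. -/
noncomputable def Phi (t : ℝ) : ℝ :=
  Real.sqrt (Real.exp 1) * ∫ τ in Set.Iic t, Real.exp (-τ ^ 2 / 2)

/-- The hard-instance chain function `F_T` on `ℝ^{T+1}` (so the paper's dimension `T ≥ 1`
is `T + 1` here; the paper's coordinate `xᵢ`, `1 ≤ i ≤ T`, is the zero-based coordinate
`x (i−1)`). -/
noncomputable def chainF (T : ℕ) (x : EuclideanSpace ℝ (Fin (T + 1))) : ℝ :=
  -Psi 1 * Phi (x 0) +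
    ∑ i : Fin T,
      (Psi (-(x i.castSucc)) * Phi (-(x i.succ)) - Psi (x i.castSucc) * Phi (x i.succ))

/-- `prog α x` is the largest one-based index `i ∈ {0, 1, …, n}` such that `|xᵢ| > α`
(with the paper's convention `x₀ ≡ 1`, so the value `0` is allowed and returned when no
coordinate exceeds `α`). -/
noncomputable def prog {n : ℕ} (α : ℝ) (x : EuclideanSpace ℝ (Fin n)) : ℕ :=
  (Finset.univ.filter fun i : Fin n => α < |x i|).sup fun i => (i : ℕ) + 1

/-- The bump function `Λ` supported on `(1/4, 1/2)`. -/
noncomputable def Lam (t : ℝ) : ℝ :=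
  if 1 / 4 < t ∧ t < 1 / 2 then
    Real.exp (-1 / (100 * (t - 1 / 4) * (1 / 2 - t)))
  else 0

/-- The integrated bump function `Γ(t) = (∫_{1/4}^t Λ) / (∫_{1/4}^{1/2} Λ)`. -/
noncomputable def Gam (t : ℝ) : ℝ :=
  (∫ τ in (1 / 4 : ℝ)..t, Lam τ) / ∫ τ in (1 / 4 : ℝ)..(1 / 2 : ℝ), Lam τ

/-- `Θ_i(x) = Γ(1 − ‖(Γ(|x_i|), …, Γ(|x_T|))‖₂)`. -/
noncomputable def Theta (T : ℕ) (x : EuclideanSpace ℝ (Fin (T + 1)))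
    (i : Fin (T + 1)) : ℝ :=
  Gam (1 - Real.sqrt (∑ j ∈ Finset.univ.filter fun j : Fin (T + 1) => i ≤ j,
    Gam |x j| ^ 2))

/-- The smoothed estimator `[ḡ_T(x,ξ)]ᵢ = ∂ᵢF_T(x)·(1 + Θᵢ(x)(ξ/p − 1))`, for
`ξ ∈ {0, 1} ⊆ ℝ`. -/
noncomputable def gbar (T : ℕ) (p : ℝ) (x : EuclideanSpace ℝ (Fin (T + 1)))
    (ξ : ℝ) : EuclideanSpace ℝ (Fin (T + 1)) :=
  WithLp.toLp 2 fun i => gradient (chainF T) x i * (1 + Theta T x i * (ξ / p - 1))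

/-!
The estimator is `∇F + (ξ/p − 1) m`, where `m` has coordinates `∂ᵢF · Θᵢ`. As `ξ/p − 1` has mean
`0` and variance `(1 − p)/p`, unbiasedness is immediate and the variance is `(1 − p)/p · ‖m‖²`.

With the convention `x₀ = 1` the chain function is the sum of the links
`Ψ(−xᵢ₋₁)Φ(−xᵢ) − Ψ(xᵢ₋₁)Φ(xᵢ)`. The factor `Θᵢ` vanishes unless `|xⱼ| < 1/2` for all `j ≥ i`.
Since `Ψ` vanishes on `(−1/2, 1/2)`, for `|xᵢ| < 1/2` only the link into `xᵢ` contributes to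
`∂ᵢF`, which is therefore at most `e · √e` in absolute value and is `0` as soon as
`|xᵢ₋₁| < 1/2`. So `m` has at most one nonzero coordinate, `‖m‖² ≤ e³`, and `e³ ≤ 23²`.
-/

section ImportanceWeights

lemma bernoulli_mean_importance_weighted {𝕜 E : Type*} [Field 𝕜] [AddCommGroup E] [Module 𝕜 E]
    {p : 𝕜} (hp : p ≠ 0) (g m : E) :
    p • (g + (1 / p - 1) • m) + (1 - p) • (g + (0 / p - 1) • m) = g := by
  match_scalars <;> field_simp <;> ring

lemma bernoulli_mean_sq_norm_importance_weight_smul {E : Type*} [SeminormedAddCommGroup E]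
    [NormedSpace ℝ E] {p : ℝ} (hp : p ≠ 0) (m : E) :
    p * ‖(1 / p - 1) • m‖ ^ 2 + (1 - p) * ‖(0 / p - 1) • m‖ ^ 2 = ‖m‖ ^ 2 * (1 - p) / p := by
  simp only [norm_smul, mul_pow, Real.norm_eq_abs, sq_abs]
  field_simp
  ring

end ImportanceWeights

section CoordinateVectors

variable {ι : Type*} [Fintype ι]

lemma norm_le_of_support_subsingleton {p : ENNReal} [Fact (1 ≤ p)] {β : ι → Type*}
    [∀ i, SeminormedAddCommGroup (β i)] {v : PiLp p β} {C : ℝ} (hC : 0 ≤ C)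
    (hbound : ∀ i, ‖v i‖ ≤ C) (hsupp : {i | v i ≠ 0}.Subsingleton) : ‖v‖ ≤ C := by
  classical
  by_cases hv : v = 0
  · simpa [hv] using hC
  obtain ⟨i, hi⟩ : ∃ i, v i ≠ 0 := by
    by_contra! h
    exact hv (PiLp.ext h)
  have hsingle : v = PiLp.single p i (v i) := by
    ext j
    obtain rfl | hji := eq_or_ne j i
    · simp
    · have hj : v j = 0 := by
        by_contra hj
        exact hji (hsupp hj hi)
      simp [hj, hji]
  rw [hsingle, PiLp.norm_single]
  exact hbound i

lemma gradient_apply_eq_of_hasLineDerivAt [DecidableEq ι] {f : EuclideanSpace ℝ ι → ℝ}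
    {x : EuclideanSpace ℝ ι} {i : ι} {f' : ℝ} (hf : DifferentiableAt ℝ f x)
    (hline : HasLineDerivAt ℝ f f' x (EuclideanSpace.single i 1)) :
    gradient f x i = f' := by
  rw [← (hf.hasFDerivAt.hasLineDerivAt _).unique hline, ← inner_gradient_left,
    EuclideanSpace.inner_single_right, one_mul, conj_trivial]

end CoordinateVectors

lemma hasDerivAt_setIntegral_Iic {E : Type*} [NormedAddCommGroup E] [NormedSpace ℝ E]
    [CompleteSpace E] {f : ℝ → E} (hcont : Continuous f) (hint : Integrable f) (t : ℝ) :
    HasDerivAt (fun t => ∫ τ in Set.Iic t, f τ) (f t) t := by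
  have hsplit : (fun t => ∫ τ in Set.Iic t, f τ) =
      fun t => (∫ τ in Set.Iic 0, f τ) + ∫ τ in (0 : ℝ)..t, f τ := by
    funext t
    rw [← intervalIntegral.integral_Iic_sub_Iic hint.integrableOn hint.integrableOn]
    abel
  rw [hsplit]
  exact (hcont.integral_hasStrictDerivAt 0 t).hasDerivAt.const_add _

section Psi

lemma Psi_of_le_half {t : ℝ} (ht : t ≤ 1 / 2) : Psi t = 0 := if_pos ht

lemma Psi_of_abs_lt_half {t : ℝ} (ht : |t| < 1 / 2) : Psi t = 0 :=
  Psi_of_le_half ((le_abs_self t).trans ht.le)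

lemma Psi_neg_of_abs_lt_half {t : ℝ} (ht : |t| < 1 / 2) : Psi (-t) = 0 :=
  Psi_of_abs_lt_half ((abs_neg t).trans_lt ht)

lemma Psi_nonneg (t : ℝ) : 0 ≤ Psi t := by
  unfold Psi
  split_ifs <;> positivity

lemma Psi_le_exp_one (t : ℝ) : Psi t ≤ Real.exp 1 := by
  unfold Psi
  split_ifs
  · positivity
  · gcongr
    exact sub_le_self _ (by positivity)

lemma Psi_neg_add_Psi_le_exp_one (t : ℝ) : Psi (-t) + Psi t ≤ Real.exp 1 := by
  rcases le_total t 0 with ht | ht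
  · rw [Psi_of_le_half (t := t) (by linarith), add_zero]
    exact Psi_le_exp_one _
  · rw [Psi_of_le_half (t := -t) (by linarith), zero_add]
    exact Psi_le_exp_one _

lemma Psi_eq_expNegInvGlue_of_half_le {t : ℝ} (ht : 1 / 2 ≤ t) :
    Psi t = Real.exp 1 * expNegInvGlue ((2 * t - 1) ^ 2) := by
  rcases ht.eq_or_lt with rfl | ht
  · norm_num [Psi]
  · have hpos : 0 < (2 * t - 1) ^ 2 := pow_pos (by linarith) 2
    rw [Psi, if_neg ht.not_ge, expNegInvGlue, if_neg hpos.not_ge, ← Real.exp_add, one_div,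
      sub_eq_add_neg]

lemma differentiable_Psi : Differentiable ℝ Psi := by
  have hglue (t : ℝ) : HasDerivAt
      (fun s : ℝ => Real.exp 1 * expNegInvGlue ((2 * s - 1) ^ 2))
      (Real.exp 1 * (deriv expNegInvGlue ((2 * t - 1) ^ 2) * (2 * (2 * t - 1) * 2))) t := by
    have hsq : HasDerivAt (fun s : ℝ => (2 * s - 1) ^ 2) (2 * (2 * t - 1) * 2) t := by
      simpa using (((hasDerivAt_id t).const_mul 2).sub_const 1).fun_pow 2
    have hexp : Differentiable ℝ expNegInvGlue :=
      (expNegInvGlue.contDiff (n := 1)).differentiable one_ne_zero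
    exact ((hexp _).hasDerivAt.comp t hsq).const_mul _
  intro t
  rcases lt_trichotomy t (1 / 2) with ht | rfl | ht
  · refine (differentiableAt_const (0 : ℝ)).congr_of_eventuallyEq ?_
    filter_upwards [Iic_mem_nhds ht] with s hs using Psi_of_le_half hs
  · have hleft : HasDerivWithinAt Psi 0 (Set.Iic (1 / 2)) (1 / 2) :=
      (hasDerivWithinAt_const _ _ 0).congr (fun s hs => Psi_of_le_half hs) (Psi_of_le_half le_rfl)
    have hright : HasDerivWithinAt Psi 0 (Set.Ici (1 / 2)) (1 / 2) := by
      have hzero := (hglue (1 / 2)).hasDerivWithinAt (s := Set.Ici (1 / 2))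
      norm_num at hzero
      exact hzero.congr (fun s hs => Psi_eq_expNegInvGlue_of_half_le hs)
        (Psi_eq_expNegInvGlue_of_half_le le_rfl)
    have hboth := hleft.union hright
    rw [Set.Iic_union_Ici, hasDerivWithinAt_univ] at hboth
    exact hboth.differentiableAt
  · refine (hglue t).differentiableAt.congr_of_eventuallyEq ?_
    filter_upwards [Ici_mem_nhds ht] with s hs using Psi_eq_expNegInvGlue_of_half_le hs

end Psi

lemma hasDerivAt_Phi (t : ℝ) :
    HasDerivAt Phi (√(Real.exp 1) * Real.exp (-t ^ 2 / 2)) t := by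
  have hint : Integrable fun τ : ℝ => Real.exp (-τ ^ 2 / 2) := by
    convert integrable_exp_neg_mul_sq (b := 1 / 2) (by norm_num) using 3
    ring
  exact (hasDerivAt_setIntegral_Iic (by fun_prop) hint t).const_mul _

section Gam

lemma Lam_nonneg (t : ℝ) : 0 ≤ Lam t := by
  unfold Lam
  split_ifs <;> positivity

lemma Lam_pos {t : ℝ} (ht : t ∈ Set.Ioo (1 / 4) (1 / 2)) : 0 < Lam t :=
  (Real.exp_pos _).trans_eq (if_pos ht).symm

lemma Lam_of_notMem {t : ℝ} (ht : t ∉ Set.Ioo (1 / 4) (1 / 2)) : Lam t = 0 := if_neg ht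

lemma Lam_le_one (t : ℝ) : Lam t ≤ 1 := by
  unfold Lam
  split_ifs with ht
  · have hleft : 0 ≤ t - 1 / 4 := by linarith [ht.1]
    have hright : 0 ≤ 1 / 2 - t := by linarith [ht.2]
    exact Real.exp_le_one_iff.2 (div_nonpos_of_nonpos_of_nonneg (by norm_num) (by positivity))
  · exact zero_le_one

lemma measurable_Lam : Measurable Lam :=
  Measurable.ite (measurableSet_Ioo (a := (1 / 4 : ℝ)) (b := 1 / 2)) (by fun_prop)
    measurable_const

lemma intervalIntegrable_Lam (a b : ℝ) : IntervalIntegrable Lam volume a b := by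
  refine (intervalIntegrable_const (c := (1 : ℝ))).mono_fun
    measurable_Lam.aestronglyMeasurable (.of_forall fun t => ?_)
  simpa [abs_of_nonneg (Lam_nonneg t)] using Lam_le_one t

lemma integral_Lam_pos : 0 < ∫ τ in (1 / 4 : ℝ)..(1 / 2 : ℝ), Lam τ :=
  intervalIntegral.intervalIntegral_pos_of_pos_on (intervalIntegrable_Lam _ _)
    (fun _ => Lam_pos) (by norm_num)

lemma Gam_sub_Gam (a b : ℝ) :
    Gam b - Gam a = (∫ τ in a..b, Lam τ) / ∫ τ in (1 / 4 : ℝ)..(1 / 2 : ℝ), Lam τ := by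
  rw [Gam, Gam, ← sub_div, intervalIntegral.integral_interval_sub_left
    (intervalIntegrable_Lam _ _) (intervalIntegrable_Lam _ _)]

lemma monotone_Gam : Monotone Gam := fun a b hab => by
  rw [← sub_nonneg, Gam_sub_Gam]
  exact div_nonneg (intervalIntegral.integral_nonneg_of_forall hab Lam_nonneg) integral_Lam_pos.le

lemma Gam_of_le_quarter {t : ℝ} (ht : t ≤ 1 / 4) : Gam t = 0 := by
  rw [Gam, intervalIntegral.integral_zero_ae, zero_div]
  refine .of_forall fun s hs => Lam_of_notMem fun hmem => ?_
  rw [Set.uIoc_of_ge ht] at hs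
  exact hs.2.not_gt hmem.1

lemma Gam_of_half_le {t : ℝ} (ht : 1 / 2 ≤ t) : Gam t = 1 := by
  have hhalf : Gam (1 / 2) = 1 := div_self integral_Lam_pos.ne'
  rw [← hhalf, ← sub_eq_zero, Gam_sub_Gam, intervalIntegral.integral_zero_ae, zero_div]
  refine .of_forall fun s hs => Lam_of_notMem fun hmem => ?_
  rw [Set.uIoc_of_le ht] at hs
  exact hs.1.not_gt hmem.2

lemma Gam_mem_Icc (t : ℝ) : Gam t ∈ Set.Icc 0 1 :=
  ⟨(Gam_of_le_quarter (min_le_right t _)).ge.trans (monotone_Gam (min_le_left t _)),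
    (monotone_Gam (le_max_left t _)).trans (Gam_of_half_le (le_max_right t _)).le⟩

end Gam

section Theta

variable {T : ℕ}

lemma abs_Theta_le_one (x : EuclideanSpace ℝ (Fin (T + 1))) (i : Fin (T + 1)) :
    |Theta T x i| ≤ 1 := by
  obtain ⟨hnonneg, hle⟩ : Theta T x i ∈ Set.Icc 0 1 := Gam_mem_Icc _
  exact (abs_of_nonneg hnonneg).trans_le hle

lemma Theta_eq_zero_of_half_le_abs {x : EuclideanSpace ℝ (Fin (T + 1))} {i j : Fin (T + 1)}
    (hij : i ≤ j) (hj : 1 / 2 ≤ |x j|) : Theta T x i = 0 := by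
  have hsum : 1 ≤ ∑ k with i ≤ k, Gam |x k| ^ 2 := by
    calc 1 = Gam |x j| ^ 2 := by rw [Gam_of_half_le hj, one_pow]
      _ ≤ ∑ k with i ≤ k, Gam |x k| ^ 2 :=
        Finset.single_le_sum (f := fun k => Gam |x k| ^ 2) (fun _ _ => sq_nonneg _) (by simpa)
  refine Gam_of_le_quarter ?_
  linarith [Real.one_le_sqrt.2 hsum]

end Theta

section ChainLink

/-- The link of the chain function joining consecutive coordinates with values `a` and `b`, namely
`Ψ(−a)Φ(−b) − Ψ(a)Φ(b)`. -/
noncomputable def chainLink (a b : ℝ) : ℝ := Psi (-a) * Phi (-b) - Psi a * Phi b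

lemma chainLink_of_abs_lt_half {a : ℝ} (ha : |a| < 1 / 2) (b : ℝ) : chainLink a b = 0 := by
  simp [chainLink, Psi_of_abs_lt_half ha, Psi_neg_of_abs_lt_half ha]

lemma differentiable_chainLink : Differentiable ℝ fun z : ℝ × ℝ => chainLink z.1 z.2 := by
  have hPsi := differentiable_Psi
  have hPhi : Differentiable ℝ Phi := fun t => (hasDerivAt_Phi t).differentiableAt
  unfold chainLink
  fun_prop

lemma hasDerivAt_chainLink_right (a b : ℝ) :
    HasDerivAt (chainLink a)
      (-((Psi (-a) + Psi a) * (√(Real.exp 1) * Real.exp (-b ^ 2 / 2)))) b := by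
  have hneg := (hasDerivAt_Phi (-b)).comp b (hasDerivAt_neg b)
  refine ((hneg.const_mul (Psi (-a))).sub ((hasDerivAt_Phi b).const_mul (Psi a))).congr_deriv ?_
  rw [neg_sq]
  ring

lemma deriv_chainLink_of_abs_lt_half {a : ℝ} (ha : |a| < 1 / 2) (b : ℝ) :
    deriv (chainLink a) b = 0 := by
  simp [(hasDerivAt_chainLink_right a b).deriv, Psi_of_abs_lt_half ha, Psi_neg_of_abs_lt_half ha]

lemma abs_deriv_chainLink_le (a b : ℝ) : |deriv (chainLink a) b| ≤ Real.exp (3 / 2) := by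
  have hPsi : 0 ≤ Psi (-a) + Psi a := add_nonneg (Psi_nonneg _) (Psi_nonneg _)
  have hgauss : Real.exp (-b ^ 2 / 2) ≤ 1 := Real.exp_le_one_iff.2 (by nlinarith)
  rw [(hasDerivAt_chainLink_right a b).deriv, abs_neg, abs_of_nonneg (by positivity)]
  calc (Psi (-a) + Psi a) * (√(Real.exp 1) * Real.exp (-b ^ 2 / 2))
      ≤ Real.exp 1 * (√(Real.exp 1) * 1) := by gcongr; exact Psi_neg_add_Psi_le_exp_one a
    _ = Real.exp (3 / 2) := by rw [mul_one, ← Real.exp_half, ← Real.exp_add]; norm_num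

end ChainLink

section ChainFunction

variable {T : ℕ}

/-- The coordinate preceding `x i`, with the paper's convention that the coordinate preceding the
first one is `1`. -/
def prevCoord (x : EuclideanSpace ℝ (Fin (T + 1))) (i : Fin (T + 1)) : ℝ :=
  Fin.cases 1 (fun k : Fin T => x k.castSucc) i

lemma chainF_eq_sum_chainLink (x : EuclideanSpace ℝ (Fin (T + 1))) :
    chainF T x = ∑ i, chainLink (prevCoord x i) (x i) := by
  have hPsi : Psi (-1) = 0 := Psi_of_le_half (by norm_num)
  rw [Fin.sum_univ_succ]
  simp [chainF, chainLink, prevCoord, hPsi]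

lemma differentiable_chainF : Differentiable ℝ (chainF T) := by
  have hprev (i : Fin (T + 1)) :
      Differentiable ℝ fun x : EuclideanSpace ℝ (Fin (T + 1)) => prevCoord x i := by
    cases i using Fin.cases <;> simp only [prevCoord, Fin.cases_zero, Fin.cases_succ] <;> fun_prop
  rw [funext chainF_eq_sum_chainLink]
  exact Differentiable.fun_sum fun i _ =>
    differentiable_chainLink.comp ((hprev i).prodMk (by fun_prop))

lemma prevCoord_congr {x y : EuclideanSpace ℝ (Fin (T + 1))} {i : Fin (T + 1)}
    (h : ∀ j < i, y j = x j) : prevCoord y i = prevCoord x i := by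
  cases i using Fin.cases with
  | zero => rfl
  | succ k => exact h _ k.castSucc_lt_succ

/-- Coordinate `i` also enters the link out of `i`, but `Ψ` makes it vanish at `x` and `y`. -/
lemma chainF_sub_chainF_of_eq_off {x y : EuclideanSpace ℝ (Fin (T + 1))} {i : Fin (T + 1)}
    (hoff : ∀ j ≠ i, y j = x j) (hx : |x i| < 1 / 2) (hy : |y i| < 1 / 2) :
    chainF T y - chainF T x =
      chainLink (prevCoord x i) (y i) - chainLink (prevCoord x i) (x i) := by
  rw [chainF_eq_sum_chainLink, chainF_eq_sum_chainLink, ← Finset.sum_sub_distrib,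
    Fintype.sum_eq_single i, prevCoord_congr fun j hj => hoff j hj.ne]
  intro j hji
  rw [hoff j hji, sub_eq_zero]
  cases j using Fin.cases with
  | zero => rfl
  | succ k =>
    simp only [prevCoord, Fin.cases_succ]
    obtain hk | hk := eq_or_ne k.castSucc i
    · rw [hk, chainLink_of_abs_lt_half hx, chainLink_of_abs_lt_half hy]
    · rw [hoff _ hk]

lemma gradient_chainF_apply_of_abs_lt_half {x : EuclideanSpace ℝ (Fin (T + 1))}
    {i : Fin (T + 1)} (hx : |x i| < 1 / 2) :
    gradient (chainF T) x i = deriv (chainLink (prevCoord x i)) (x i) := by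
  refine gradient_apply_eq_of_hasLineDerivAt (differentiable_chainF x) ?_
  set e : EuclideanSpace ℝ (Fin (T + 1)) := EuclideanSpace.single i 1 with he
  have hshift : HasDerivAt (fun t => chainF T x - chainLink (prevCoord x i) (x i) +
      chainLink (prevCoord x i) (x i + t)) (deriv (chainLink (prevCoord x i)) (x i)) 0 := by
    have hlink := (hasDerivAt_chainLink_right (prevCoord x i) (x i + 0)).differentiableAt.hasDerivAt
    simpa using (hlink.comp_const_add (x i) 0).const_add
      (chainF T x - chainLink (prevCoord x i) (x i))
  have hsmall : ∀ᶠ t : ℝ in nhds 0, |x i + t| < 1 / 2 :=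
    ContinuousAt.eventually_lt (by fun_prop) continuousAt_const (by simpa using hx)
  refine hshift.congr_of_eventuallyEq ?_
  filter_upwards [hsmall] with t ht
  have hcoord : (x + t • e) i = x i + t := by simp [he]
  have hdiff := chainF_sub_chainF_of_eq_off (y := x + t • e)
    (fun j hj => by simp [he, hj]) hx (hcoord ▸ ht)
  rw [hcoord] at hdiff
  linarith

end ChainFunction

section MaskedGradient

variable {T : ℕ}

/-- The vector with coordinates `∂ᵢF_T(x) · Θᵢ(x)`: the noise direction of `gbar`, which is
`∇F_T(x)` plus `ξ/p − 1` times this vector. -/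
noncomputable def maskedGradient (x : EuclideanSpace ℝ (Fin (T + 1))) :
    EuclideanSpace ℝ (Fin (T + 1)) :=
  WithLp.toLp 2 fun i => gradient (chainF T) x i * Theta T x i

lemma gbar_eq_gradient_add_smul_maskedGradient (p : ℝ) (x : EuclideanSpace ℝ (Fin (T + 1)))
    (ξ : ℝ) : gbar T p x ξ = gradient (chainF T) x + (ξ / p - 1) • maskedGradient x := by
  ext i
  simp only [gbar, maskedGradient, PiLp.add_apply, PiLp.smul_apply, smul_eq_mul]
  ring

lemma abs_lt_half_of_maskedGradient_apply_ne_zero {x : EuclideanSpace ℝ (Fin (T + 1))}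
    {i j : Fin (T + 1)} (hi : maskedGradient x i ≠ 0) (hij : i ≤ j) : |x j| < 1 / 2 := by
  contrapose! hi
  exact mul_eq_zero_of_right _ (Theta_eq_zero_of_half_le_abs hij hi)

lemma maskedGradient_apply_eq_zero_of_lt {x : EuclideanSpace ℝ (Fin (T + 1))}
    {i j : Fin (T + 1)} (hi : maskedGradient x i ≠ 0) (hij : i < j) : maskedGradient x j = 0 := by
  have hsmall {k : Fin (T + 1)} (hk : i ≤ k) : |x k| < 1 / 2 :=
    abs_lt_half_of_maskedGradient_apply_ne_zero hi hk
  have hprev : |prevCoord x j| < 1 / 2 := by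
    obtain ⟨k, rfl⟩ := Fin.exists_succ_eq.2 (Fin.ne_zero_of_lt hij)
    exact hsmall (Fin.le_castSucc_iff.2 hij)
  refine mul_eq_zero_of_left ?_ _
  rw [gradient_chainF_apply_of_abs_lt_half (hsmall hij.le), deriv_chainLink_of_abs_lt_half hprev]

lemma support_maskedGradient_subsingleton (x : EuclideanSpace ℝ (Fin (T + 1))) :
    {i | maskedGradient x i ≠ 0}.Subsingleton := by
  intro i hi j hj
  by_contra hne
  rcases lt_or_gt_of_ne hne with hij | hji
  · exact hj (maskedGradient_apply_eq_zero_of_lt hi hij)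
  · exact hi (maskedGradient_apply_eq_zero_of_lt hj hji)

lemma abs_maskedGradient_apply_le (x : EuclideanSpace ℝ (Fin (T + 1))) (i : Fin (T + 1)) :
    |maskedGradient x i| ≤ Real.exp (3 / 2) := by
  by_cases hi : maskedGradient x i = 0
  · simpa [hi] using (Real.exp_pos _).le
  have hx := abs_lt_half_of_maskedGradient_apply_ne_zero hi le_rfl
  calc |maskedGradient x i|
      = |deriv (chainLink (prevCoord x i)) (x i)| * |Theta T x i| := by
        rw [← gradient_chainF_apply_of_abs_lt_half hx, ← abs_mul]; rfl
    _ ≤ Real.exp (3 / 2) * 1 := by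
        gcongr
        exacts [abs_deriv_chainLink_le _ _, abs_Theta_le_one x i]
    _ = Real.exp (3 / 2) := mul_one _

lemma norm_maskedGradient_le (x : EuclideanSpace ℝ (Fin (T + 1))) :
    ‖maskedGradient x‖ ≤ Real.exp (3 / 2) :=
  norm_le_of_support_subsingleton (Real.exp_pos _).le (abs_maskedGradient_apply_le x)
    (support_maskedGradient_subsingleton x)

lemma norm_maskedGradient_le_twentyThree (x : EuclideanSpace ℝ (Fin (T + 1))) :
    ‖maskedGradient x‖ ≤ 23 := by
  calc ‖maskedGradient x‖ ≤ Real.exp (3 / 2) := norm_maskedGradient_le x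
    _ ≤ Real.exp 1 ^ 2 := by rw [← Real.exp_nat_mul]; gcongr; norm_num
    _ ≤ 3 ^ 2 := by gcongr; exact Real.exp_one_lt_three.le
    _ ≤ 23 := by norm_num

end MaskedGradient

/-- For `ξ ∼ Bernoulli(p)` (so `ξ = 1` with probability `p` and
`ξ = 0` with probability `1 − p`), the smoothed estimator `ḡ_T` is unbiased for
`∇F_T` and its variance is at most `23²(1−p)/p`.  (Stated for dimension `T + 1`,
i.e. for every paper dimension `T ≥ 1`; Bernoulli expectations are written out as
`p·(value at ξ=1) + (1−p)·(value at ξ=0)`.) -/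
theorem gbar_unbiased_and_variance
    (T : ℕ) (p : ℝ) (hp : p ∈ Set.Ioc (0 : ℝ) 1)
    (x : EuclideanSpace ℝ (Fin (T + 1))) :
    p • gbar T p x 1 + (1 - p) • gbar T p x 0 = gradient (chainF T) x
      ∧ p * ‖gbar T p x 1 - gradient (chainF T) x‖ ^ 2
          + (1 - p) * ‖gbar T p x 0 - gradient (chainF T) x‖ ^ 2
        ≤ 23 ^ 2 * (1 - p) / p := by
  have hp₀ : p ≠ 0 := hp.1.ne'
  constructor
  · simp only [gbar_eq_gradient_add_smul_maskedGradient]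
    exact bernoulli_mean_importance_weighted hp₀ _ _
  · simp only [gbar_eq_gradient_add_smul_maskedGradient, add_sub_cancel_left]
    rw [bernoulli_mean_sq_norm_importance_weight_smul hp₀]
    have hp₁ : 0 ≤ 1 - p := sub_nonneg.2 hp.2
    have hp_pos := hp.1
    gcongr
    exact norm_maskedGradient_le_twentyThree x
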